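/- arXiv:2310.15881 — 8 statements merged into one kernel-verified Lean document; each statement's English description precedes it below -/
import Mathlib

section
/- Let r₁, r₂ > 0, u ∈ ℝ, and ξ₁, ξ₂ ∈ ℝ. Define the one-step play update P_r(u, ξ) := max(u − r, min(u + r, ξ)). Then |P_{r₁}(u, ξ₁) − P_{r₂}(u, ξ₂)| ≤ max(|ξ₁ − ξ₂|, |r₁ − r₂|). In particular, if |ξ₁ − ξ₂| ≤ |r₁ − r₂| then |P_{r₁}(u, ξ₁) − P_{r₂}(u, ξ₂)| ≤ |r₁ − r₂|, so the 1-Lipschitz dependence of the memory configuration on the threshold r is preserved by one step of the discrete play operator. -/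
/-- The one-step (time-discrete) play operator with threshold `r`. -/
noncomputable def playStep (r u ξ : ℝ) : ℝ := max (u - r) (min (u + r) ξ)

/-- One step of the discrete play operator satisfies
`|P_{r₁}(u, ξ₁) − P_{r₂}(u, ξ₂)| ≤ max (|ξ₁ − ξ₂|) (|r₁ − r₂|)`; in particular the
1-Lipschitz dependence of the memory configuration on the threshold is preserved. -/
theorem stmt1 (r₁ r₂ u ξ₁ ξ₂ : ℝ) (hr₁ : 0 < r₁) (hr₂ : 0 < r₂) :
    |playStep r₁ u ξ₁ - playStep r₂ u ξ₂| ≤ max |ξ₁ - ξ₂| |r₁ - r₂| ∧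
    (|ξ₁ - ξ₂| ≤ |r₁ - r₂| →
      |playStep r₁ u ξ₁ - playStep r₂ u ξ₂| ≤ |r₁ - r₂|) := by
  -- `max` and `min` are 1-Lipschitz for the sup norm, and both endpoints `u ± r` are
  -- 1-Lipschitz in `r`.
  have key : |playStep r₁ u ξ₁ - playStep r₂ u ξ₂| ≤ max |ξ₁ - ξ₂| |r₁ - r₂| := by
    have hmax := abs_max_sub_max_le_max (u - r₁) (min (u + r₁) ξ₁) (u - r₂) (min (u + r₂) ξ₂)
    have hmin := abs_min_sub_min_le_max (u + r₁) ξ₁ (u + r₂) ξ₂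
    rw [sub_sub_sub_cancel_left, abs_sub_comm r₂ r₁] at hmax
    rw [add_sub_add_left_eq_sub, max_comm] at hmin
    exact hmax.trans (max_le (le_max_right _ _) hmin)
  exact ⟨key, fun h => key.trans (max_le h le_rfl)⟩
end

section
/- Let T > 0, r > 0, let u : [0, T] → ℝ be absolutely continuous (i.e., u(t) = u(0) + ∫₀ᵗ u'(s) ds for some integrable u'), and let λ₀ ∈ ℝ satisfy |u(0) − λ₀| ≤ r. Then there exists a unique absolutely continuous function ξ : [0, T] → ℝ such that ξ(0) = λ₀, |u(t) − ξ(t)| ≤ r for all t ∈ [0, T], and for almost every t ∈ [0, T] one has ξ'(t)(u(t) − ξ(t) − z) ≥ 0 for all z ∈ [−r, r]. -/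
/-!
Uniqueness is monotonicity: testing the variational inequality of each of two outputs with the
value `u - ξ` of the other gives `(ξ₁' - ξ₂') (ξ₁ - ξ₂) ≤ 0` almost everywhere, so the absolutely
continuous function `(ξ₁ - ξ₂)²`, which vanishes at `0`, is nonincreasing.

For existence, the output is given by an explicit sup-inf formula. Iterating the clamping map
`x ↦ max (u s - r) (min (u s + r) x)` over all times `s ≤ t` suggests
`ξ t = max (min λ₀ (inf_{[0,t]} (u + r))) (sup_{σ ≤ t} min (u σ - r) (inf_{[σ,t]} (u + r)))`,
which is encoded as the supremum `play` of the set `playSet` of all levels lying below this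
expression. This formula satisfies, for `s ≤ t`,
`min (ξ s) (inf_{[s,t]} (u + r)) ≤ ξ t ≤ max (ξ s) (sup_{[s,t]} (u - r))`
(`le_play`, `play_le`). Hence increments of `ξ` are bounded by `∫ |u'|`, so `ξ` is absolutely
continuous. Moreover `ξ t < u t + r` forces `ξ s ≥ ξ t` for `s > t` close to `t`, and
`ξ t > u t - r` forces `ξ s ≤ ξ t`. So `ξ'` can be negative only where `u - ξ = -r` and positive
only where `u - ξ = r`, which is the variational inequality.
-/

open MeasureTheory

/-- `ξ` is an output of the play operator with threshold `r` and initial memory `λ₀`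
applied to the input `u` on `[0, T]`: `ξ` is absolutely continuous with `ξ 0 = λ₀`,
`|u t - ξ t| ≤ r` everywhere, and the variational inequality
`ξ' t * (u t - ξ t - z) ≥ 0` holds for a.e. `t` and all `z ∈ [-r, r]`. -/
def IsPlayOutput (T r lam0 : ℝ) (u ξ : ℝ → ℝ) : Prop :=
  ∃ ξ' : ℝ → ℝ, IntegrableOn ξ' (Set.Icc 0 T) ∧
    (∀ t ∈ Set.Icc 0 T, ξ t = lam0 + ∫ s in (0:ℝ)..t, ξ' s) ∧
    (∀ t ∈ Set.Icc 0 T, |u t - ξ t| ≤ r) ∧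
    (∀ᵐ t ∂(volume.restrict (Set.Icc 0 T)),
      ∀ z ∈ Set.Icc (-r) r, ξ' t * (u t - ξ t - z) ≥ 0)

/-- The levels `c` that the play output has reached or exceeded at time `t`: either `c` is below
the initial memory or below the lower obstacle `u σ - r` at some time `σ ≤ t`, and from then on
the upper obstacle `u + r` has never dropped below `c`. -/
def playSet (r lam0 : ℝ) (u : ℝ → ℝ) (t : ℝ) : Set ℝ :=
  {c | (c ≤ lam0 ∧ ∀ τ ∈ Set.Icc 0 t, c ≤ u τ + r) ∨
    ∃ σ ∈ Set.Icc 0 t, c ≤ u σ - r ∧ ∀ τ ∈ Set.Icc σ t, c ≤ u τ + r}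

/-- The output of the play operator, as the supremum of the levels in `playSet`. -/
noncomputable def play (r lam0 : ℝ) (u : ℝ → ℝ) (t : ℝ) : ℝ :=
  sSup (playSet r lam0 u t)

section Play

variable {r lam0 : ℝ} {u : ℝ → ℝ}

lemma playSet_le {t c : ℝ} (ht : 0 ≤ t) (hc : c ∈ playSet r lam0 u t) : c ≤ u t + r := by
  rcases hc with h | ⟨σ, hσ, -, h⟩
  · exact h.2 t ⟨ht, le_rfl⟩
  · exact h t ⟨hσ.2, le_rfl⟩

lemma playSet_bddAbove {t : ℝ} (ht : 0 ≤ t) : BddAbove (playSet r lam0 u t) :=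
  ⟨u t + r, fun _ hc => playSet_le ht hc⟩

lemma mem_playSet (hr : 0 < r) {t : ℝ} (ht : 0 ≤ t) : u t - r ∈ playSet r lam0 u t := by
  refine Or.inr ⟨t, ⟨ht, le_rfl⟩, le_rfl, fun τ hτ => ?_⟩
  obtain rfl : τ = t := le_antisymm hτ.2 hτ.1
  linarith

lemma playSet_mono {t c d : ℝ} (hdc : d ≤ c) (hc : c ∈ playSet r lam0 u t) :
    d ∈ playSet r lam0 u t := by
  rcases hc with h | ⟨σ, hσ, h1, h2⟩
  · exact Or.inl ⟨hdc.trans h.1, fun τ hτ => hdc.trans (h.2 τ hτ)⟩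
  · exact Or.inr ⟨σ, hσ, hdc.trans h1, fun τ hτ => hdc.trans (h2 τ hτ)⟩

lemma lower_le_play (hr : 0 < r) {t : ℝ} (ht : 0 ≤ t) : u t - r ≤ play r lam0 u t :=
  le_csSup (playSet_bddAbove ht) (mem_playSet hr ht)

lemma play_le_upper (hr : 0 < r) {t : ℝ} (ht : 0 ≤ t) : play r lam0 u t ≤ u t + r :=
  csSup_le ⟨_, mem_playSet hr ht⟩ fun _ hc => playSet_le ht hc

lemma play_zero (hr : 0 < r) (h : |u 0 - lam0| ≤ r) : play r lam0 u 0 = lam0 := by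
  rw [abs_le] at h
  apply le_antisymm
  · refine csSup_le ⟨_, mem_playSet hr le_rfl⟩ ?_
    rintro c (hc | ⟨σ, hσ, h1, -⟩)
    · exact hc.1
    · obtain rfl : σ = 0 := le_antisymm hσ.2 hσ.1
      linarith
  · refine le_csSup (playSet_bddAbove le_rfl) (Or.inl ⟨le_rfl, fun τ hτ => ?_⟩)
    obtain rfl : τ = 0 := le_antisymm hτ.2 hτ.1
    linarith

/-- Between `s` and `t` the output can only be pushed down by the upper obstacle. -/
lemma le_play (hr : 0 < r) {s t K : ℝ} (hs : 0 ≤ s) (hst : s ≤ t)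
    (hK : ∀ τ ∈ Set.Icc s t, K ≤ u τ + r) : min (play r lam0 u s) K ≤ play r lam0 u t := by
  refine le_of_forall_lt fun c hc => ?_
  obtain ⟨d, hcd, hd⟩ := exists_between hc
  obtain ⟨hd1, hd2⟩ := lt_min_iff.1 hd
  obtain ⟨e, he, hde⟩ := exists_lt_of_lt_csSup ⟨_, mem_playSet hr hs⟩ hd1
  refine hcd.trans_le (le_csSup (playSet_bddAbove (hs.trans hst)) ?_)
  rcases playSet_mono hde.le he with h | ⟨σ, hσ, h1, h2⟩
  · refine Or.inl ⟨h.1, fun τ hτ => ?_⟩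
    rcases le_total τ s with h' | h'
    · exact h.2 τ ⟨hτ.1, h'⟩
    · exact hd2.le.trans (hK τ ⟨h', hτ.2⟩)
  · refine Or.inr ⟨σ, ⟨hσ.1, hσ.2.trans hst⟩, h1, fun τ hτ => ?_⟩
    rcases le_total τ s with h' | h'
    · exact h2 τ ⟨hτ.1, h'⟩
    · exact hd2.le.trans (hK τ ⟨h', hτ.2⟩)

/-- Between `s` and `t` the output can only be pushed up by the lower obstacle. -/
lemma play_le (hr : 0 < r) {s t M : ℝ} (hs : 0 ≤ s) (hst : s ≤ t)
    (hM : ∀ τ ∈ Set.Icc s t, u τ - r ≤ M) : play r lam0 u t ≤ max (play r lam0 u s) M := by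
  refine csSup_le ⟨_, mem_playSet hr (hs.trans hst)⟩ ?_
  rintro c (h | ⟨σ, hσ, h1, h2⟩)
  · exact le_max_of_le_left (le_csSup (playSet_bddAbove hs)
      (Or.inl ⟨h.1, fun τ hτ => h.2 τ ⟨hτ.1, hτ.2.trans hst⟩⟩))
  · rcases le_total σ s with h' | h'
    · exact le_max_of_le_left (le_csSup (playSet_bddAbove hs)
        (Or.inr ⟨σ, ⟨hσ.1, h'⟩, h1, fun τ hτ => h2 τ ⟨hτ.1, hτ.2.trans hst⟩⟩))
    · exact le_max_of_le_right (h1.trans (hM σ ⟨h', hσ.2⟩))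

/-- A uniform bound on the increments of `u` over `[s, t]` bounds the increment of the output. -/
lemma abs_play_sub_le (hr : 0 < r) {s t I : ℝ} (hs : 0 ≤ s) (hst : s ≤ t)
    (hI : ∀ τ ∈ Set.Icc s t, |u τ - u s| ≤ I) :
    |play r lam0 u t - play r lam0 u s| ≤ I := by
  have hI0 : 0 ≤ I := (abs_nonneg _).trans (hI s ⟨le_rfl, hst⟩)
  have h1 := le_play (lam0 := lam0) (u := u) hr hs hst (K := u s + r - I) fun τ hτ => by
    have := abs_le.1 (hI τ hτ); linarith
  have h2 := play_le (lam0 := lam0) (u := u) hr hs hst (M := u s - r + I) fun τ hτ => by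
    have := abs_le.1 (hI τ hτ); linarith
  have h3 := lower_le_play (lam0 := lam0) (u := u) hr hs
  have h4 := play_le_upper (lam0 := lam0) (u := u) hr hs
  rw [abs_le]
  constructor
  · rcases min_le_iff.1 h1 with h | h <;> linarith
  · rcases le_max_iff.1 h2 with h | h <;> linarith

end Play

lemma deriv_nonneg_of_eventually_right {f : ℝ → ℝ} {d t : ℝ} (hf : HasDerivAt f d t)
    (h : ∀ᶠ s in nhdsWithin t (Set.Ioi t), f t ≤ f s) : 0 ≤ d := by
  have h1 := (hasDerivAt_iff_tendsto_slope_left_right.1 hf).2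
  refine ge_of_tendsto h1 ?_
  filter_upwards [h, self_mem_nhdsWithin] with s hs hts
  rw [slope_def_field]
  exact div_nonneg (sub_nonneg.2 hs) (sub_nonneg.2 (le_of_lt hts))

/-- A property holding near `t ∈ [0, T)` within `[0, T]` holds on whole intervals `[t, s]` for
`s > t` close to `t`. -/
lemma eventually_forall_Icc {T t : ℝ} (ht : t ∈ Set.Ico 0 T) {p : ℝ → Prop}
    (h : ∀ᶠ s in nhdsWithin t (Set.Icc 0 T), p s) :
    ∀ᶠ s in nhdsWithin t (Set.Ioi t), ∀ τ ∈ Set.Icc t s, p τ := by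
  obtain ⟨ε, hε, hp⟩ := Metric.mem_nhdsWithin_iff.1 h
  have hlt : t < min (t + ε) T := lt_min (by linarith) ht.2
  filter_upwards [Ioo_mem_nhdsGT hlt] with s hs τ hτ
  obtain ⟨hs1, hs2⟩ := lt_min_iff.1 hs.2
  refine hp ⟨?_, ht.1.trans hτ.1, by linarith [hτ.2]⟩
  rw [Metric.mem_ball, Real.dist_eq, abs_of_nonneg (by linarith [hτ.1])]
  linarith [hτ.2]

/-- Monotonicity of the variational inequality: two outputs of the same input coincide. -/
lemma play_unique (T r lam0 : ℝ) (u ξ₁ ξ₂ : ℝ → ℝ) (h₁ : IsPlayOutput T r lam0 u ξ₁)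
    (h₂ : IsPlayOutput T r lam0 u ξ₂) : ∀ t ∈ Set.Icc 0 T, ξ₁ t = ξ₂ t := by
  obtain ⟨f, hfi, hf, hfr, hfv⟩ := h₁
  obtain ⟨g, hgi, hg, hgr, hgv⟩ := h₂
  intro t ht
  have sub : ∀ {s}, s ∈ Set.Icc 0 t → s ∈ Set.Icc 0 T := fun hs => ⟨hs.1, hs.2.trans ht.2⟩
  have ii : ∀ {f : ℝ → ℝ}, IntegrableOn f (Set.Icc 0 T) → ∀ {s}, s ∈ Set.Icc 0 T →
      IntervalIntegrable f volume 0 s := fun hf s hs =>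
    (intervalIntegrable_iff_integrableOn_Icc_of_le hs.1).2
      (hf.mono_set (Set.Icc_subset_Icc_right hs.2))
  have hii := (ii hfi ht).sub (ii hgi ht)
  let F : ℝ → ℝ := fun x => ∫ v in (0:ℝ)..x, (f v - g v)
  have hF : AbsolutelyContinuousOnInterval F 0 t :=
    hii.absolutelyContinuousOnInterval_intervalIntegral (by simp)
  have hFe : ∀ s ∈ Set.Icc 0 T, F s = ξ₁ s - ξ₂ s := fun s hs => by
    simp only [F]
    rw [hf s hs, hg s hs, intervalIntegral.integral_sub (ii hfi hs) (ii hgi hs)]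
    ring
  have key := hF.integral_deriv_mul_eq_sub hF
  have hle : ∫ x in (0:ℝ)..t, deriv F x * F x + F x * deriv F x ≤ 0 := by
    rw [intervalIntegral.integral_of_le ht.1]
    apply integral_nonpos_of_ae
    rw [Filter.EventuallyLE, ae_restrict_iff' measurableSet_Ioc]
    rw [ae_restrict_iff' measurableSet_Icc] at hfv hgv
    filter_upwards [hfv, hgv, hii.ae_hasDerivAt_integral] with s h1 h2 h3 hs
    have hs' : s ∈ Set.Icc 0 t := ⟨hs.1.le, hs.2⟩
    have hsT := sub hs'
    have hd : deriv F s = f s - g s :=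
      (h3 (by rwa [Set.uIcc_of_le ht.1]) 0 (by simp)).deriv
    have a1 := h1 hsT (u s - ξ₂ s) (abs_le.1 (hgr s hsT))
    have a2 := h2 hsT (u s - ξ₁ s) (abs_le.1 (hfr s hsT))
    simp only [Pi.zero_apply]
    rw [hd, hFe s hsT]
    nlinarith
  have h0 : F 0 = 0 := by simp [F]
  rw [key, h0] at hle
  have : F t = 0 := by nlinarith [sq_nonneg (F t)]
  rw [hFe t ht] at this
  linarith

lemma play_isPlayOutput (T r lam0 : ℝ) (hT : 0 < T) (hr : 0 < r)
    (u u' : ℝ → ℝ) (hu' : IntegrableOn u' (Set.Icc 0 T))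
    (hu : ∀ t ∈ Set.Icc 0 T, u t = u 0 + ∫ s in (0:ℝ)..t, u' s)
    (hinit : |u 0 - lam0| ≤ r) : IsPlayOutput T r lam0 u (play r lam0 u) := by
  set ξ := play r lam0 u with hξ
  have ii : ∀ {f : ℝ → ℝ}, IntegrableOn f (Set.Icc 0 T) → ∀ {s t}, s ∈ Set.Icc 0 T →
      t ∈ Set.Icc 0 T → IntervalIntegrable f volume s t := fun hf s t hs ht =>
    (hf.mono_set (Set.uIcc_subset_Icc hs ht)).intervalIntegrable
  have h0 : (0:ℝ) ∈ Set.Icc 0 T := ⟨le_rfl, hT.le⟩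
  have hTT : T ∈ Set.Icc 0 T := ⟨hT.le, le_rfl⟩
  have hucont : ContinuousOn u (Set.Icc 0 T) := by
    have := ((ii hu' h0 hTT).absolutelyContinuousOnInterval_intervalIntegral
      (c := 0) (by simp)).continuousOn
    rw [Set.uIcc_of_le hT.le] at this
    exact (continuousOn_const.add this).congr hu
  have hn : IntegrableOn (fun x => |u' x|) (Set.Icc 0 T) := hu'.abs
  let V : ℝ → ℝ := fun x => ∫ v in (0:ℝ)..x, |u' v|
  have hV : AbsolutelyContinuousOnInterval V 0 T :=
    (ii hn h0 hTT).absolutelyContinuousOnInterval_intervalIntegral (by simp)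
  have hVsub : ∀ s ∈ Set.Icc 0 T, ∀ t ∈ Set.Icc 0 T, V t - V s = ∫ v in s..t, |u' v| :=
    fun s hs t ht => intervalIntegral.integral_interval_sub_left (ii hn h0 ht) (ii hn h0 hs)
  have hVmono : ∀ s ∈ Set.Icc 0 T, ∀ t ∈ Set.Icc 0 T, s ≤ t → V s ≤ V t := by
    intro s hs t ht hst
    have := intervalIntegral.integral_nonneg (μ := volume) hst fun v _ => abs_nonneg (u' v)
    linarith [hVsub s hs t ht]
  have hinc : ∀ s ∈ Set.Icc 0 T, ∀ t ∈ Set.Icc 0 T, s ≤ t → |ξ t - ξ s| ≤ V t - V s := by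
    intro s hs t ht hst
    refine abs_play_sub_le hr hs.1 hst fun τ hτ => ?_
    have hτT : τ ∈ Set.Icc 0 T := ⟨hs.1.trans hτ.1, hτ.2.trans ht.2⟩
    have e : u τ - u s = ∫ v in s..τ, u' v := by
      rw [hu τ hτT, hu s hs,
        ← intervalIntegral.integral_interval_sub_left (ii hu' h0 hτT) (ii hu' h0 hs)]
      ring
    have h1 := intervalIntegral.abs_integral_le_integral_abs (f := u') (μ := volume) hτ.1
    rw [← e, ← hVsub s hs τ hτT] at h1
    linarith [hVmono τ hτT t ht hτ.2]
  have hdist : ∀ s ∈ Set.Icc 0 T, ∀ t ∈ Set.Icc 0 T, dist (ξ s) (ξ t) ≤ dist (V s) (V t) := by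
    intro s hs t ht
    rcases le_total s t with h | h
    · rw [dist_comm, dist_comm (V s), Real.dist_eq, Real.dist_eq]
      exact (hinc s hs t ht h).trans (le_abs_self _)
    · rw [Real.dist_eq, Real.dist_eq]
      exact (hinc t ht s hs h).trans (le_abs_self _)
  have hac : AbsolutelyContinuousOnInterval ξ 0 T := by
    rw [absolutelyContinuousOnInterval_iff] at hV ⊢
    intro ε hε
    obtain ⟨δ, hδ, H⟩ := hV ε hε
    refine ⟨δ, hδ, fun E hE hlen => lt_of_le_of_lt (Finset.sum_le_sum fun i hi => ?_) (H E hE hlen)⟩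
    have := hE.1 i hi
    rw [Set.uIcc_of_le hT.le] at this
    exact hdist _ this.1 _ this.2
  refine ⟨deriv ξ, ?_, ?_, ?_, ?_⟩
  · exact (intervalIntegrable_iff_integrableOn_Icc_of_le hT.le).1 hac.intervalIntegrable_deriv
  · intro t ht
    have hac' : AbsolutelyContinuousOnInterval ξ 0 t := hac.mono (by
      rw [Set.uIcc_of_le hT.le, Set.uIcc_of_le ht.1]; exact Set.Icc_subset_Icc_right ht.2)
    rw [hac'.integral_deriv_eq_sub, hξ, play_zero hr hinit]
    ring
  · intro t ht
    have h1 := lower_le_play (lam0 := lam0) (u := u) hr ht.1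
    have h2 := play_le_upper (lam0 := lam0) (u := u) hr ht.1
    rw [abs_le]
    constructor <;> linarith
  · rw [ae_restrict_iff' measurableSet_Icc]
    have hneT : ∀ᵐ x : ℝ, x ≠ T := by simp [ae_iff, measure_singleton]
    filter_upwards [hac.ae_differentiableAt, hneT] with t hdiff htT ht z hz
    have hd := (hdiff (by rwa [Set.uIcc_of_le hT.le])).hasDerivAt
    have ht' : t ∈ Set.Ico 0 T := ⟨ht.1, lt_of_le_of_ne ht.2 htT⟩
    have hl := lower_le_play (lam0 := lam0) (u := u) hr ht.1
    have hup := play_le_upper (lam0 := lam0) (u := u) hr ht.1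
    -- strictly below the upper obstacle the output cannot decrease
    have up : ξ t < u t + r → 0 ≤ deriv ξ t := by
      intro h
      refine deriv_nonneg_of_eventually_right hd ?_
      have hev := (hucont t ht).eventually (lt_mem_nhds (show ξ t - r < u t by linarith))
      filter_upwards [eventually_forall_Icc ht' hev, self_mem_nhdsWithin] with s hs hts
      have := le_play (lam0 := lam0) (u := u) hr ht.1 (le_of_lt hts) (K := ξ t) fun τ hτ => by
        linarith [hs τ hτ]
      simpa [← hξ] using this
    -- strictly above the lower obstacle the output cannot increase
    have down : u t - r < ξ t → deriv ξ t ≤ 0 := by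
      intro h
      refine neg_nonneg.1 (deriv_nonneg_of_eventually_right hd.neg ?_)
      have hev := (hucont t ht).eventually (gt_mem_nhds (show u t < ξ t + r by linarith))
      filter_upwards [eventually_forall_Icc ht' hev, self_mem_nhdsWithin] with s hs hts
      have := play_le (lam0 := lam0) (u := u) hr ht.1 (le_of_lt hts) (M := ξ t) fun τ hτ => by
        linarith [hs τ hτ]
      simpa [← hξ] using this
    rcases lt_trichotomy (deriv ξ t) 0 with h | h | h
    · have : u t + r ≤ ξ t := not_lt.1 fun h' => absurd (up h') (not_le.2 h)
      exact mul_nonneg_of_nonpos_of_nonpos h.le (by linarith [hz.1])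
    · simp [h]
    · have : ξ t ≤ u t - r := not_lt.1 fun h' => absurd (down h') (not_le.2 h)
      exact mul_nonneg h.le (by linarith [hz.2])

/-- Existence and uniqueness of the output of the play operator with threshold `r`
and initial memory `λ₀` for an absolutely continuous input `u` on `[0, T]`. -/
theorem stmt3 (T r lam0 : ℝ) (hT : 0 < T) (hr : 0 < r)
    (u u' : ℝ → ℝ) (hu' : IntegrableOn u' (Set.Icc 0 T))
    (hu : ∀ t ∈ Set.Icc 0 T, u t = u 0 + ∫ s in (0:ℝ)..t, u' s)
    (hinit : |u 0 - lam0| ≤ r) :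
    (∃ ξ : ℝ → ℝ, IsPlayOutput T r lam0 u ξ) ∧
    (∀ ξ₁ ξ₂ : ℝ → ℝ, IsPlayOutput T r lam0 u ξ₁ → IsPlayOutput T r lam0 u ξ₂ →
      ∀ t ∈ Set.Icc 0 T, ξ₁ t = ξ₂ t) := by
  exact ⟨⟨_, play_isPlayOutput T r lam0 hT hr u u' hu' hu hinit⟩, fun ξ₁ ξ₂ h₁ h₂ =>
    play_unique T r lam0 u ξ₁ ξ₂ h₁ h₂⟩
end

section
/- Let T > 0, r > 0, let ρ : ℝ → ℝ be continuous with ρ > 0, and set ψ(ξ) := ∫₀^ξ ρ(v) dv and Ψ(ξ) := ∫₀^ξ ψ(v) dv. Let u : [0, T] → ℝ be continuous and let ξ : [0, T] → ℝ be absolutely continuous with |u(t) − ξ(t)| ≤ r for all t and ξ'(t)(u(t) − ξ(t) − z) ≥ 0 for a.e. t and all z ∈ [−r, r]. Then the functions t ↦ ψ(ξ(t)) and t ↦ ψ(ξ(t))ξ(t) − Ψ(ξ(t)) are absolutely continuous, and for almost every t ∈ [0, T]: u(t)·(d/dt)ψ(ξ(t)) = (d/dt)[ψ(ξ(t))ξ(t)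 − Ψ(ξ(t))] + ρ(ξ(t)) · r · |ξ'(t)|. -/
/-!
The composition of a `C¹` function `G` with an absolutely continuous function `ξ` is absolutely
continuous, because `G` is Lipschitz on the compact range of `ξ`, and its a.e. derivative is
`G'(ξ) ξ'` (`comp_eq_add_integral`). Applied to `G = ψ`, with `G' = ρ`, and to
`G(x) = ψ(x) x - Ψ(x)`, with `G'(x) = ρ(x) x`, this gives the densities `ρ(ξ) ξ'` and `ρ(ξ) ξ ξ'`.
The energy balance thus reduces to `ξ' (u - ξ) = r |ξ'|`, which follows from the variational
inequality at `z = ± r` together with `|u - ξ| ≤ r` (`mul_eq_of_variational`).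
-/

open MeasureTheory

/-- `ψ(ξ) = ∫₀^ξ ρ(v) dv`. -/
noncomputable def psi (ρ : ℝ → ℝ) (x : ℝ) : ℝ := ∫ v in (0:ℝ)..x, ρ v

/-- `Ψ(ξ) = ∫₀^ξ ψ(v) dv`. -/
noncomputable def Psi (ρ : ℝ → ℝ) (x : ℝ) : ℝ := ∫ v in (0:ℝ)..x, psi ρ v

theorem LipschitzOnWith.comp_absolutelyContinuousOnInterval {G f : ℝ → ℝ} {K : NNReal}
    {a b : ℝ} (hG : LipschitzOnWith K G (f '' Set.uIcc a b))
    (hf : AbsolutelyContinuousOnInterval f a b) :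
    AbsolutelyContinuousOnInterval (fun t => G (f t)) a b := by
  rw [absolutelyContinuousOnInterval_iff] at hf ⊢
  intro ε hε
  obtain ⟨δ, hδ, h⟩ := hf (ε / (K + 1)) (by positivity)
  refine ⟨δ, hδ, fun E hE hlt => ?_⟩
  calc ∑ i ∈ Finset.range E.1, dist (G (f (E.2 i).1)) (G (f (E.2 i).2))
      ≤ ∑ i ∈ Finset.range E.1, K * dist (f (E.2 i).1) (f (E.2 i).2) :=
        Finset.sum_le_sum fun i hi => hG.dist_le_mul _
          (Set.mem_image_of_mem f (hE.1 i hi).1) _ (Set.mem_image_of_mem f (hE.1 i hi).2)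
    _ = K * ∑ i ∈ Finset.range E.1, dist (f (E.2 i).1) (f (E.2 i).2) :=
        (Finset.mul_sum _ _ _).symm
    _ ≤ K * (ε / (K + 1)) := by
        gcongr
        exact (h E hE hlt).le
    _ < (K + 1) * (ε / (K + 1)) := by gcongr; linarith
    _ = ε := by field

/-- Chain rule in integral form: a `C¹` function of an indefinite Lebesgue integral with density
`f` is again an indefinite integral, with density `g(x(t)) f(t)`. -/
theorem comp_eq_add_integral {G g f x : ℝ → ℝ} {T : ℝ} (hg : Continuous g)
    (hG : ∀ y, HasDerivAt G (g y) y) (hf : IntegrableOn f (Set.Icc 0 T))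
    (hx : ∀ t ∈ Set.Icc 0 T, x t = x 0 + ∫ s in (0:ℝ)..t, f s) :
    ∀ t ∈ Set.Icc 0 T, G (x t) = G (x 0) + ∫ s in (0:ℝ)..t, g (x s) * f s := by
  intro t ht
  have hft : IntervalIntegrable f volume 0 t := by
    rw [intervalIntegrable_iff_integrableOn_Icc_of_le ht.1]
    exact hf.mono_set (Set.Icc_subset_Icc_right ht.2)
  -- `y` extends `x` by its integral formula, so that its two-sided derivative makes sense.
  set y : ℝ → ℝ := fun s => x 0 + ∫ v in (0:ℝ)..s, f v with hy
  have hxy : ∀ s ∈ Set.Icc 0 t, x s = y s := fun s hs => hx s ⟨hs.1, hs.2.trans ht.2⟩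
  have hyac : AbsolutelyContinuousOnInterval y 0 t :=
    ((LipschitzWith.const (x 0)).lipschitzOnWith (s := Set.uIcc 0 t)
      |>.absolutelyContinuousOnInterval).fun_add
      (hft.absolutelyContinuousOnInterval_intervalIntegral (by simp))
  have hGc : ContDiff ℝ 1 G := by
    rw [contDiff_one_iff_deriv]
    refine ⟨fun z => (hG z).differentiableAt, ?_⟩
    rwa [show deriv G = g from funext fun z => (hG z).deriv]
  obtain ⟨K, hK⟩ : ∃ K, LipschitzOnWith K G (y '' Set.uIcc 0 t) := by
    obtain ⟨R, hR⟩ :=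
      (isCompact_uIcc.image_of_continuousOn hyac.continuousOn).isBounded.subset_closedBall 0
    obtain ⟨K, hK⟩ := hGc.contDiffOn.exists_lipschitzOnWith (by decide)
      (convex_closedBall (0:ℝ) R) (isCompact_closedBall _ _)
    exact ⟨K, hK.mono hR⟩
  have hFTC := (hK.comp_absolutelyContinuousOnInterval hyac).integral_deriv_eq_sub
  have hcongr : ∫ s in (0:ℝ)..t, deriv (fun s => G (y s)) s
      = ∫ s in (0:ℝ)..t, g (x s) * f s := by
    apply intervalIntegral.integral_congr_ae
    filter_upwards [hft.ae_hasDerivAt_integral] with s hs hst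
    have hs' : s ∈ Set.uIcc 0 t := Set.uIoc_subset_uIcc hst
    have hd : HasDerivAt y (f s) s := (hs hs' 0 (by simp)).const_add (x 0)
    rw [hxy s (by rwa [Set.uIcc_of_le ht.1] at hs')]
    exact ((hG (y s)).comp s hd).deriv
  rw [hcongr] at hFTC
  rw [hFTC, ← hxy t ⟨ht.1, le_rfl⟩, ← hxy 0 ⟨le_rfl, ht.1⟩]
  ring

theorem hasDerivAt_psi {ρ : ℝ → ℝ} (hρ : Continuous ρ) (x : ℝ) :
    HasDerivAt (psi ρ) (ρ x) x :=
  intervalIntegral.integral_hasDerivAt_right (hρ.intervalIntegrable _ _)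
    (hρ.stronglyMeasurableAtFilter _ _) hρ.continuousAt

theorem continuous_psi {ρ : ℝ → ℝ} (hρ : Continuous ρ) : Continuous (psi ρ) :=
  continuous_iff_continuousAt.2 fun x => (hasDerivAt_psi hρ x).continuousAt

theorem hasDerivAt_Psi {ρ : ℝ → ℝ} (hρ : Continuous ρ) (x : ℝ) :
    HasDerivAt (Psi ρ) (psi ρ x) x :=
  intervalIntegral.integral_hasDerivAt_right ((continuous_psi hρ).intervalIntegrable _ _)
    ((continuous_psi hρ).stronglyMeasurableAtFilter _ _)
    (continuous_psi hρ).continuousAt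

/-- The velocity `p` vanishes unless the constraint `|w| ≤ r` is active with the sign of `p`. -/
theorem mul_eq_of_variational {r p w : ℝ} (hr : 0 < r) (hw : |w| ≤ r)
    (h : ∀ z ∈ Set.Icc (-r) r, p * (w - z) ≥ 0) : p * w = r * |p| := by
  have h1 := h r ⟨by linarith, le_rfl⟩
  have h2 := h (-r) ⟨le_rfl, by linarith⟩
  apply le_antisymm
  · calc p * w ≤ |p * w| := le_abs_self _
      _ = |w| * |p| := by rw [abs_mul, mul_comm]
      _ ≤ r * |p| := by gcongr
  · rcases abs_cases p with ⟨hp, _⟩ | ⟨hp, _⟩ <;> rw [hp] <;> linarith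

/-- Hysteresis energy balance for a single threshold: if `ξ` solves the play
variational inequality with threshold `r` and input `u`, then `t ↦ ψ(ξ t)` and
`t ↦ ψ(ξ t) ξ t − Ψ(ξ t)` are absolutely continuous (with integrable densities
`a`, `b`), and a.e. the input power splits as
`u t * (d/dt)ψ(ξ t) = (d/dt)[ψ(ξ t) ξ t − Ψ(ξ t)] + ρ(ξ t) r |ξ' t|`. -/
theorem stmt5 (T r : ℝ) (hT : 0 < T) (hr : 0 < r)
    (ρ : ℝ → ℝ) (hρc : Continuous ρ) (hρpos : ∀ v, 0 < ρ v)
    (u ξ ξ' : ℝ → ℝ)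
    (hu : ContinuousOn u (Set.Icc 0 T))
    (hξ' : IntegrableOn ξ' (Set.Icc 0 T))
    (hξ : ∀ t ∈ Set.Icc 0 T, ξ t = ξ 0 + ∫ s in (0:ℝ)..t, ξ' s)
    (hcon : ∀ t ∈ Set.Icc 0 T, |u t - ξ t| ≤ r)
    (hvar : ∀ᵐ t ∂(volume.restrict (Set.Icc 0 T)),
      ∀ z ∈ Set.Icc (-r) r, ξ' t * (u t - ξ t - z) ≥ 0) :
    ∃ a b : ℝ → ℝ, IntegrableOn a (Set.Icc 0 T) ∧ IntegrableOn b (Set.Icc 0 T) ∧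
      (∀ t ∈ Set.Icc 0 T, psi ρ (ξ t) = psi ρ (ξ 0) + ∫ s in (0:ℝ)..t, a s) ∧
      (∀ t ∈ Set.Icc 0 T, psi ρ (ξ t) * ξ t - Psi ρ (ξ t)
        = (psi ρ (ξ 0) * ξ 0 - Psi ρ (ξ 0)) + ∫ s in (0:ℝ)..t, b s) ∧
      (∀ᵐ t ∂(volume.restrict (Set.Icc 0 T)),
        u t * a t = b t + ρ (ξ t) * r * |ξ' t|) := by
  have hxc : ContinuousOn ξ (Set.Icc 0 T) := by
    have h := (intervalIntegral.continuousOn_primitive_interval (μ := volume)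
      (by rwa [Set.uIcc_of_le hT.le])).const_add (ξ 0) (f := fun t => ∫ s in (0:ℝ)..t, ξ' s)
    rw [Set.uIcc_of_le hT.le] at h
    exact h.congr hξ
  refine ⟨fun t => ρ (ξ t) * ξ' t, fun t => ρ (ξ t) * ξ t * ξ' t, ?_, ?_, ?_, ?_, ?_⟩
  · exact hξ'.continuousOn_mul (hρc.comp_continuousOn hxc) isCompact_Icc
  · exact hξ'.continuousOn_mul ((hρc.comp_continuousOn hxc).mul hxc) isCompact_Icc
  · exact comp_eq_add_integral hρc (hasDerivAt_psi hρc) hξ' hξ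
  · refine comp_eq_add_integral (G := fun x => psi ρ x * x - Psi ρ x) (g := fun x => ρ x * x)
      (hρc.mul continuous_id) (fun x => ?_) hξ' hξ
    convert! ((hasDerivAt_psi hρc x).mul (hasDerivAt_id x)).sub (hasDerivAt_Psi hρc x) using 1
    simp
  · filter_upwards [hvar, ae_restrict_mem measurableSet_Icc] with t ht htT
    linear_combination ρ (ξ t) * mul_eq_of_variational hr (hcon t htT) ht
end

section
/- Let T > 0, let u : [0, T] → ℝ be absolutely continuous, let 0 < r₁ ≤ r₂, and for i = 1, 2 let ξᵢ : [0, T] → ℝ be absolutely continuous with |u(t) − ξᵢ(t)| ≤ rᵢ for all t and ξᵢ'(t)(u(t) − ξᵢ(t) − z) ≥ 0 for a.e. t and all z ∈ [−rᵢ, rᵢ]. If |ξ₁(0) − ξ₂(0)| ≤ r₂ − r₁, then |ξ₁(t) − ξ₂(t)| ≤ r₂ − r₁ for all t ∈ [0, T]. -/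
/-!
Put `w = ξ₁ - ξ₂` and `R = r₂ - r₁`. Wherever `w > R`, the constraints `|u - ξᵢ| ≤ rᵢ` force
`u - ξ₁ < r₁` and `u - ξ₂ > -r₂`, so the variational inequalities tested with `z = r₁` and
`z = -r₂` give `ξ₁' ≤ 0 ≤ ξ₂'`, that is `w' ≤ 0`; symmetrically `(-w)' ≤ 0` wherever `-w > R`.
A function which is nonincreasing wherever it exceeds a level `R` and starts below `R` never
exceeds `R` (`le_of_deriv_nonpos_above`); this is applied to `w` and to `-w`.
-/

open MeasureTheory

/-- An absolutely continuous function (the integral of its derivative `f'`) which starts at or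
below the level `R`, and whose derivative is a.e. nonpositive where it exceeds `R`, stays at or
below `R`: after the last time it is `≤ R` it could only decrease. -/
lemma le_of_deriv_nonpos_above {T R : ℝ} {f f' : ℝ → ℝ}
    (hf' : IntegrableOn f' (Set.Icc 0 T))
    (hf : ∀ t ∈ Set.Icc 0 T, f t = f 0 + ∫ s in (0:ℝ)..t, f' s)
    (hneg : ∀ᵐ t ∂(volume.restrict (Set.Icc 0 T)), R < f t → f' t ≤ 0)
    (h0 : f 0 ≤ R) : ∀ t ∈ Set.Icc 0 T, f t ≤ R := by
  intro t ht
  have hsub : Set.Icc 0 t ⊆ Set.Icc 0 T := Set.Icc_subset_Icc_right ht.2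
  have hcont : ContinuousOn f (Set.Icc 0 t) :=
    ((continuousOn_const.add
      (intervalIntegral.continuousOn_primitive_interval
        (by rw [Set.uIcc_of_le (ht.1.trans ht.2)]; exact hf'))).congr
      (by rw [Set.uIcc_of_le (ht.1.trans ht.2)]; exact hf)).mono
      (by rw [Set.uIcc_of_le (ht.1.trans ht.2)]; exact hsub)
  have hcomp : IsCompact (Set.Icc 0 t ∩ f ⁻¹' Set.Iic R) :=
    isCompact_Icc.of_isClosed_subset (hcont.preimage_isClosed_of_isClosed isClosed_Icc isClosed_Iic)
      Set.inter_subset_left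
  -- `a` is the last time before `t` at which `f ≤ R`.
  obtain ⟨a, ⟨haI, haR⟩, hmax⟩ := hcomp.exists_isGreatest ⟨0, ⟨le_rfl, ht.1⟩, h0⟩
  have hint : ∀ x ∈ Set.Icc 0 t, IntervalIntegrable f' volume 0 x := fun x hx =>
    (intervalIntegrable_iff_integrableOn_Icc_of_le hx.1).2
      (hf'.mono_set (Set.Icc_subset_Icc_right (hx.2.trans ht.2)))
  have hdiff : f t - f a = ∫ s in a..t, f' s := by
    rw [hf t ht, hf a (hsub haI), ← intervalIntegral.integral_interval_sub_left
      (hint t ⟨ht.1, le_rfl⟩) (hint a haI)]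
    ring
  have hle : ∫ s in a..t, f' s ≤ 0 := by
    rw [intervalIntegral.integral_of_le haI.2]
    refine setIntegral_nonpos_ae measurableSet_Ioc ?_
    filter_upwards [(ae_restrict_iff' measurableSet_Icc).1 hneg] with s hs hsI
    have hs0 : s ∈ Set.Icc 0 t := ⟨haI.1.trans hsI.1.le, hsI.2⟩
    refine hs (hsub hs0) ?_
    by_contra! hcon
    exact absurd (hmax ⟨hs0, hcon⟩) (not_le.2 hsI.1)
  have : f a ≤ R := haR
  linarith

/-- The 1-Lipschitz dependence of the memory configuration on the threshold is
preserved by the play operator during the evolution: if `ξ₁`, `ξ₂` are play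
outputs with thresholds `r₁ ≤ r₂` for the same absolutely continuous input `u`
and `|ξ₁ 0 - ξ₂ 0| ≤ r₂ - r₁`, then `|ξ₁ t - ξ₂ t| ≤ r₂ - r₁` for all `t`. -/
theorem stmt6 (T r₁ r₂ : ℝ) (hT : 0 < T) (hr₁ : 0 < r₁) (hr₁₂ : r₁ ≤ r₂)
    (u u' ξ₁ ξ₁' ξ₂ ξ₂' : ℝ → ℝ)
    (hu' : IntegrableOn u' (Set.Icc 0 T))
    (hu : ∀ t ∈ Set.Icc 0 T, u t = u 0 + ∫ s in (0:ℝ)..t, u' s)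
    (hξ₁' : IntegrableOn ξ₁' (Set.Icc 0 T))
    (hξ₁ : ∀ t ∈ Set.Icc 0 T, ξ₁ t = ξ₁ 0 + ∫ s in (0:ℝ)..t, ξ₁' s)
    (hcon₁ : ∀ t ∈ Set.Icc 0 T, |u t - ξ₁ t| ≤ r₁)
    (hvar₁ : ∀ᵐ t ∂(volume.restrict (Set.Icc 0 T)),
      ∀ z ∈ Set.Icc (-r₁) r₁, ξ₁' t * (u t - ξ₁ t - z) ≥ 0)
    (hξ₂' : IntegrableOn ξ₂' (Set.Icc 0 T))
    (hξ₂ : ∀ t ∈ Set.Icc 0 T, ξ₂ t = ξ₂ 0 + ∫ s in (0:ℝ)..t, ξ₂' s)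
    (hcon₂ : ∀ t ∈ Set.Icc 0 T, |u t - ξ₂ t| ≤ r₂)
    (hvar₂ : ∀ᵐ t ∂(volume.restrict (Set.Icc 0 T)),
      ∀ z ∈ Set.Icc (-r₂) r₂, ξ₂' t * (u t - ξ₂ t - z) ≥ 0)
    (hinit : |ξ₁ 0 - ξ₂ 0| ≤ r₂ - r₁) :
    ∀ t ∈ Set.Icc 0 T, |ξ₁ t - ξ₂ t| ≤ r₂ - r₁ := by
  have hII : ∀ {g : ℝ → ℝ}, IntegrableOn g (Set.Icc 0 T) → ∀ t ∈ Set.Icc 0 T,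
      IntervalIntegrable g volume 0 t := fun hg t ht =>
    (intervalIntegrable_iff_integrableOn_Icc_of_le ht.1).2
      (hg.mono_set (Set.Icc_subset_Icc_right ht.2))
  have hinit' := abs_le.1 hinit
  have hupper : ∀ t ∈ Set.Icc 0 T, ξ₁ t - ξ₂ t ≤ r₂ - r₁ := by
    refine le_of_deriv_nonpos_above (f := fun t => ξ₁ t - ξ₂ t) (f' := fun t => ξ₁' t - ξ₂' t)
      (hξ₁'.sub hξ₂') (fun t ht => ?_) ?_ hinit'.2
    · rw [intervalIntegral.integral_sub (hII hξ₁' t ht) (hII hξ₂' t ht), hξ₁ t ht, hξ₂ t ht]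
      ring
    · filter_upwards [hvar₁, hvar₂, ae_restrict_mem measurableSet_Icc] with t h₁ h₂ ht hgt
      have c₁ := abs_le.1 (hcon₁ t ht)
      have c₂ := abs_le.1 (hcon₂ t ht)
      have d₁ : ξ₁' t ≤ 0 :=
        nonpos_of_mul_nonneg_left (h₁ r₁ ⟨by linarith, le_rfl⟩) (by linarith)
      have d₂ : 0 ≤ ξ₂' t :=
        nonneg_of_mul_nonneg_left (h₂ (-r₂) ⟨le_rfl, by linarith⟩) (by linarith)
      linarith
  have hlower : ∀ t ∈ Set.Icc 0 T, ξ₂ t - ξ₁ t ≤ r₂ - r₁ := by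
    refine le_of_deriv_nonpos_above (f := fun t => ξ₂ t - ξ₁ t) (f' := fun t => ξ₂' t - ξ₁' t)
      (hξ₂'.sub hξ₁') (fun t ht => ?_) ?_ (by linarith [hinit'.1])
    · rw [intervalIntegral.integral_sub (hII hξ₂' t ht) (hII hξ₁' t ht), hξ₁ t ht, hξ₂ t ht]
      ring
    · filter_upwards [hvar₁, hvar₂, ae_restrict_mem measurableSet_Icc] with t h₁ h₂ ht hgt
      have c₁ := abs_le.1 (hcon₁ t ht)
      have c₂ := abs_le.1 (hcon₂ t ht)
      have d₁ : 0 ≤ ξ₁' t :=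
        nonneg_of_mul_nonneg_left (h₁ (-r₁) ⟨le_rfl, by linarith⟩) (by linarith)
      have d₂ : ξ₂' t ≤ 0 :=
        nonpos_of_mul_nonneg_left (h₂ r₂ ⟨by linarith, le_rfl⟩) (by linarith)
      linarith
  exact fun t ht => abs_le.2 ⟨by linarith [hlower t ht], hupper t ht⟩
end

section
/- Let T > 0, r > 0, let u : [0, T] → ℝ be absolutely continuous, and for i = 1, 2 let ξᵢ : [0, T] → ℝ be absolutely continuous with |u(t) − ξᵢ(t)| ≤ r for all t and ξᵢ'(t)(u(t) − ξᵢ(t) − z) ≥ 0 for a.e. t and all z ∈ [−r, r]. Then the function t ↦ |ξ₁(t) − ξ₂(t)| is nonincreasing on [0, T]; in particular |ξ₁(t) − ξ₂(t)| ≤ |ξ₁(0) − ξ₂(0)| for all t. -/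
open MeasureTheory

/-!
The difference `d = ξ₁ - ξ₂` is absolutely continuous with derivative `ξ₁' - ξ₂'`. The constraint
`|u - ξ₂| ≤ r` allows testing the variational inequality for `ξ₁` with `z = u - ξ₂`, and vice versa.
Adding the two resulting inequalities gives `(ξ₁' - ξ₂') d ≤ 0` almost everywhere. The fundamental
theorem of calculus for the absolutely continuous function `d²` then shows that `d²`, hence `|d|`,
is nonincreasing (`antitoneOn_abs_of_ae_mul_nonpos`).
-/

/-- An absolutely continuous function `d` on `[0, T]` with a.e. derivative `g` satisfying
`g * d ≤ 0` a.e. has nonincreasing absolute value, since `d²` has a.e. derivative `2 * g * d`. -/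
lemma antitoneOn_abs_of_ae_mul_nonpos {T : ℝ} {d g : ℝ → ℝ}
    (hg : IntegrableOn g (Set.Icc 0 T))
    (hd : ∀ t ∈ Set.Icc 0 T, d t = d 0 + ∫ s in (0:ℝ)..t, g s)
    (hgd : ∀ᵐ t ∂(volume.restrict (Set.Icc 0 T)), g t * d t ≤ 0) :
    AntitoneOn (fun t => |d t|) (Set.Icc 0 T) := by
  intro s hs t ht hst
  have hT : 0 ≤ T := hs.1.trans hs.2
  have hgi : IntervalIntegrable g volume 0 T :=
    (intervalIntegrable_iff_integrableOn_Icc_of_le hT).2 hg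
  -- `D` agrees with `d` on `[0, T]`; unlike `d`, it is given by one formula near the endpoints,
  -- where a two-sided derivative is needed.
  set D : ℝ → ℝ := fun x => d 0 + ∫ v in (0:ℝ)..x, g v with hD
  have hDac : AbsolutelyContinuousOnInterval D 0 T :=
    AbsolutelyContinuousOnInterval.fun_add
      ((LipschitzWith.const (d 0)).lipschitzOnWith.absolutelyContinuousOnInterval)
      (hgi.absolutelyContinuousOnInterval_intervalIntegral Set.left_mem_uIcc)
  have hDst : AbsolutelyContinuousOnInterval D s t :=
    hDac.mono (by
      rw [Set.uIcc_of_le hst, Set.uIcc_of_le hT]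
      exact Set.Icc_subset_Icc hs.1 ht.2)
  have hint := hDst.integral_deriv_mul_eq_sub hDst
  have hnonneg : 0 ≤ ∫ x in s..t, -(deriv D x * D x + D x * deriv D x) := by
    apply intervalIntegral.integral_nonneg_of_ae_restrict hst
    have hgd' := ae_restrict_of_ae_restrict_of_subset (Set.Icc_subset_Icc hs.1 ht.2) hgd
    filter_upwards [hgd', ae_restrict_of_ae hgi.ae_hasDerivAt_integral,
      ae_restrict_mem measurableSet_Icc] with x hx hderiv hxst
    have hxT : x ∈ Set.Icc 0 T := ⟨hs.1.trans hxst.1, hxst.2.trans ht.2⟩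
    have hDx : deriv D x = g x :=
      ((hderiv (by rwa [Set.uIcc_of_le hT]) 0 Set.left_mem_uIcc).const_add (d 0)).deriv
    have hdx : D x = d x := (hd x hxT).symm
    simp only [Pi.zero_apply, hDx, hdx]
    linarith [mul_comm (g x) (d x)]
  rw [intervalIntegral.integral_neg, hint] at hnonneg
  have hds : D s = d s := (hd s hs).symm
  have hdt : D t = d t := (hd t ht).symm
  rw [hds, hdt] at hnonneg
  exact sq_le_sq.1 (by nlinarith)

/-- Contraction property of the play operator with respect to the initial memory:
if `ξ₁`, `ξ₂` are play outputs with the same threshold `r` for the same absolutely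
continuous input `u`, then `t ↦ |ξ₁ t - ξ₂ t|` is nonincreasing on `[0, T]`;
in particular `|ξ₁ t - ξ₂ t| ≤ |ξ₁ 0 - ξ₂ 0|`. -/
theorem stmt7 (T r : ℝ) (hT : 0 < T) (hr : 0 < r)
    (u u' ξ₁ ξ₁' ξ₂ ξ₂' : ℝ → ℝ)
    (hu' : IntegrableOn u' (Set.Icc 0 T))
    (hu : ∀ t ∈ Set.Icc 0 T, u t = u 0 + ∫ s in (0:ℝ)..t, u' s)
    (hξ₁' : IntegrableOn ξ₁' (Set.Icc 0 T))
    (hξ₁ : ∀ t ∈ Set.Icc 0 T, ξ₁ t = ξ₁ 0 + ∫ s in (0:ℝ)..t, ξ₁' s)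
    (hcon₁ : ∀ t ∈ Set.Icc 0 T, |u t - ξ₁ t| ≤ r)
    (hvar₁ : ∀ᵐ t ∂(volume.restrict (Set.Icc 0 T)),
      ∀ z ∈ Set.Icc (-r) r, ξ₁' t * (u t - ξ₁ t - z) ≥ 0)
    (hξ₂' : IntegrableOn ξ₂' (Set.Icc 0 T))
    (hξ₂ : ∀ t ∈ Set.Icc 0 T, ξ₂ t = ξ₂ 0 + ∫ s in (0:ℝ)..t, ξ₂' s)
    (hcon₂ : ∀ t ∈ Set.Icc 0 T, |u t - ξ₂ t| ≤ r)
    (hvar₂ : ∀ᵐ t ∂(volume.restrict (Set.Icc 0 T)),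
      ∀ z ∈ Set.Icc (-r) r, ξ₂' t * (u t - ξ₂ t - z) ≥ 0) :
    AntitoneOn (fun t => |ξ₁ t - ξ₂ t|) (Set.Icc 0 T) ∧
    ∀ t ∈ Set.Icc 0 T, |ξ₁ t - ξ₂ t| ≤ |ξ₁ 0 - ξ₂ 0| := by
  have hanti : AntitoneOn (fun t => |ξ₁ t - ξ₂ t|) (Set.Icc 0 T) := by
    refine antitoneOn_abs_of_ae_mul_nonpos (d := fun t => ξ₁ t - ξ₂ t)
      (g := fun t => ξ₁' t - ξ₂' t) (hξ₁'.sub hξ₂') ?_ ?_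
    · intro t ht
      have hsub : Set.Icc 0 t ⊆ Set.Icc 0 T := Set.Icc_subset_Icc_right ht.2
      rw [intervalIntegral.integral_sub
        ((intervalIntegrable_iff_integrableOn_Icc_of_le ht.1).2 (hξ₁'.mono_set hsub))
        ((intervalIntegrable_iff_integrableOn_Icc_of_le ht.1).2 (hξ₂'.mono_set hsub))]
      linarith [hξ₁ t ht, hξ₂ t ht]
    · filter_upwards [hvar₁, hvar₂, ae_restrict_mem measurableSet_Icc] with t h₁ h₂ ht
      have k₁ := h₁ (u t - ξ₂ t) (abs_le.1 (hcon₂ t ht))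
      have k₂ := h₂ (u t - ξ₁ t) (abs_le.1 (hcon₁ t ht))
      linarith
  exact ⟨hanti, fun t ht => hanti (Set.left_mem_Icc.2 hT.le) ht ht.1⟩
end

section
/- Let T > 0, Λ > 0, r > 0, let u : [0, T] → ℝ be absolutely continuous with |u(t)| ≤ Λ for all t, and let ξ : [0, T] → ℝ be absolutely continuous with |u(t) − ξ(t)| ≤ r for all t and ξ'(t)(u(t) − ξ(t) − z) ≥ 0 for a.e. t and all z ∈ [−r, r]. If |ξ(0)| ≤ (Λ − r)⁺, where (x)⁺ := max(x, 0), then |ξ(t)| ≤ (Λ − r)⁺ for all t ∈ [0, T]. -/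
/-!
Write `M = max (Λ - r) 0`. Wherever `ξ > M ≥ Λ - r`, the bound `u ≤ Λ` gives `u - ξ < r`, so the
variational inequality with `z = r` forces `ξ' ≤ 0`: above the level `M` the function `ξ` cannot
increase. Hence `ξ` never crosses `M` from below (`le_of_ae_nonpos_above`). The lower bound is the
same statement for `-ξ`, using `-u ≤ Λ` and `z = -r`.
-/

open MeasureTheory

/-- Barrier principle for absolutely continuous functions: if `f' ≤ 0` almost everywhere on the
set where `f > M`, and `f` starts at or below `M`, then it stays at or below `M`. If `f t > M`,
integrate `f'` from the last time before `t` at which `f ≤ M`. -/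
theorem le_of_ae_nonpos_above {T M : ℝ} {f f' : ℝ → ℝ}
    (hf' : IntegrableOn f' (Set.Icc 0 T))
    (hf : ∀ t ∈ Set.Icc 0 T, f t = f 0 + ∫ s in (0:ℝ)..t, f' s)
    (hae : ∀ᵐ t ∂(volume.restrict (Set.Icc 0 T)), M < f t → f' t ≤ 0)
    (h0 : f 0 ≤ M) : ∀ t ∈ Set.Icc 0 T, f t ≤ M := by
  intro t ht
  by_contra! hlt
  have hcont : ContinuousOn f (Set.Icc 0 T) :=
    ((continuousOn_const (c := f 0)).add
      (intervalIntegral.continuousOn_primitive_Icc hf')).congr fun x hx ↦ by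
        rw [hf x hx, intervalIntegral.integral_of_le hx.1, ← integral_Icc_eq_integral_Ioc]
        rfl
  have hsub : Set.Icc 0 t ⊆ Set.Icc 0 T := Set.Icc_subset_Icc_right ht.2
  have hcomp : IsCompact (Set.Icc 0 t ∩ f ⁻¹' Set.Iic M) :=
    isCompact_Icc.of_isClosed_subset
      ((hcont.mono hsub).preimage_isClosed_of_isClosed isClosed_Icc isClosed_Iic)
      Set.inter_subset_left
  obtain ⟨s, ⟨hs, hsM⟩, hmax⟩ :=
    hcomp.exists_isGreatest ⟨0, ⟨le_rfl, ht.1⟩, h0⟩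
  have hsM : f s ≤ M := hsM
  have hint : ∀ x ∈ Set.Icc 0 T, IntervalIntegrable f' volume 0 x := fun x hx ↦
    (intervalIntegrable_iff_integrableOn_Icc_of_le hx.1).2
      (hf'.mono_set (Set.Icc_subset_Icc_right hx.2))
  have hdiff : f t - f s = ∫ x in s..t, f' x := by
    rw [hf t ht, hf s (hsub hs),
      ← intervalIntegral.integral_interval_sub_left (hint t ht) (hint s (hsub hs))]
    ring
  have hneg : ∫ x in s..t, f' x ≤ 0 := by
    rw [intervalIntegral.integral_of_le hs.2]
    have hIoc : Set.Ioc s t ⊆ Set.Icc 0 T := fun x hx ↦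
      ⟨hs.1.trans hx.1.le, hx.2.trans ht.2⟩
    refine integral_nonpos_of_ae ?_
    filter_upwards [ae_restrict_of_ae_restrict_of_subset hIoc hae,
      ae_restrict_mem measurableSet_Ioc] with x hx hxm
    refine hx (lt_of_not_ge fun hxM ↦ ?_)
    exact absurd (hmax ⟨⟨hs.1.trans hxm.1.le, hxm.2⟩, hxM⟩) (not_le.2 hxm.1)
  linarith

/-- If the input stays in `[-Λ, Λ]` and the initial memory lies in the Preisach
triangle of size `Λ`, i.e. `|ξ 0| ≤ (Λ - r)⁺`, then the memory state of the play
operator with threshold `r` remains in that triangle. -/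
theorem stmt8 (T Λ r : ℝ) (hT : 0 < T) (hΛ : 0 < Λ) (hr : 0 < r)
    (u u' ξ ξ' : ℝ → ℝ)
    (hu' : IntegrableOn u' (Set.Icc 0 T))
    (hu : ∀ t ∈ Set.Icc 0 T, u t = u 0 + ∫ s in (0:ℝ)..t, u' s)
    (hubd : ∀ t ∈ Set.Icc 0 T, |u t| ≤ Λ)
    (hξ' : IntegrableOn ξ' (Set.Icc 0 T))
    (hξ : ∀ t ∈ Set.Icc 0 T, ξ t = ξ 0 + ∫ s in (0:ℝ)..t, ξ' s)
    (hcon : ∀ t ∈ Set.Icc 0 T, |u t - ξ t| ≤ r)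
    (hvar : ∀ᵐ t ∂(volume.restrict (Set.Icc 0 T)),
      ∀ z ∈ Set.Icc (-r) r, ξ' t * (u t - ξ t - z) ≥ 0)
    (hinit : |ξ 0| ≤ max (Λ - r) 0) :
    ∀ t ∈ Set.Icc 0 T, |ξ t| ≤ max (Λ - r) 0 := by
  have hM : Λ - r ≤ max (Λ - r) 0 := le_max_left _ _
  rw [abs_le] at hinit
  have hupper : ∀ t ∈ Set.Icc 0 T, ξ t ≤ max (Λ - r) 0 := by
    refine le_of_ae_nonpos_above hξ' hξ ?_ hinit.2
    filter_upwards [hvar, ae_restrict_mem measurableSet_Icc] with t hv ht hlt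
    have hz := hv r ⟨by linarith, le_rfl⟩
    have hub := (abs_le.1 (hubd t ht)).2
    by_contra! hpos
    nlinarith [mul_pos hpos (show 0 < ξ t + r - u t by linarith)]
  have hlower : ∀ t ∈ Set.Icc 0 T, -ξ t ≤ max (Λ - r) 0 := by
    refine le_of_ae_nonpos_above (f := fun t ↦ -ξ t) (f' := fun t ↦ -ξ' t) hξ'.neg
      (fun t ht ↦ ?_) ?_ (by linarith [hinit.1])
    · simp only [intervalIntegral.integral_neg]
      rw [hξ t ht]
      ring
    · filter_upwards [hvar, ae_restrict_mem measurableSet_Icc] with t hv ht hlt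
      have hz := hv (-r) ⟨le_rfl, by linarith⟩
      have hub := (abs_le.1 (hubd t ht)).1
      by_contra! hpos
      nlinarith [mul_pos hpos (show 0 < u t - ξ t + r by linarith)]
  exact fun t ht ↦ abs_le.2 ⟨by linarith [hlower t ht], hupper t ht⟩
end

section
/- Let p ∈ (1, 2), define Q_p(z) := z ∫₀^z s(1 + s)^{p−3} ds and M_p(z) := z^{2p/(p−1)} (1 + z)^{p(p−3)/(p−1)} for z ≥ 0. Then there exists a constant K > 0 such that M_p(z) ≤ K Q_p(z) for all z > 0. -/
/-!
The constant `K = 2` works. Since `p < 3`, the weight `(1+s)^{p-3}` is smallest on `[0,z]` at `s = z`,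
so `Q_p(z) ≥ z³ (1+z)^{p-3} / 2` (`Qp_lower`). With `c = (3-p)/(p-1) > 0` the exponents of `M_p` are
`2p/(p-1) = 3 + c` and `p(p-3)/(p-1) = (p-3) - c`, hence
`M_p(z) = z³ (1+z)^{p-3} (z/(1+z))^c ≤ z³ (1+z)^{p-3}` (`Mp_upper`).
-/

/-- `Q_p(z) = z ∫₀^z s (1+s)^{p-3} ds`. -/
noncomputable def Qp (p z : ℝ) : ℝ := z * ∫ s in (0:ℝ)..z, s * (1 + s) ^ (p - 3)

/-- `M_p(z) = z^{2p/(p-1)} (1+z)^{p(p-3)/(p-1)}`. -/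
noncomputable def Mp (p z : ℝ) : ℝ :=
  z ^ (2 * p / (p - 1)) * (1 + z) ^ (p * (p - 3) / (p - 1))

lemma Qp_lower {p z : ℝ} (hp : p < 2) (hz : 0 < z) :
    z ^ 3 * (1 + z) ^ (p - 3) ≤ 2 * Qp p z := by
  have hint : ∫ s in (0:ℝ)..z, s * (1 + z) ^ (p - 3) = z ^ 2 / 2 * (1 + z) ^ (p - 3) := by
    rw [intervalIntegral.integral_mul_const, integral_id]
    ring
  have hle : ∫ s in (0:ℝ)..z, s * (1 + z) ^ (p - 3) ≤ ∫ s in (0:ℝ)..z, s * (1 + s) ^ (p - 3) := by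
    apply intervalIntegral.integral_mono_on hz.le
    · exact (by fun_prop : Continuous fun s : ℝ => s * (1 + z) ^ (p - 3)).intervalIntegrable _ _
    · apply ContinuousOn.intervalIntegrable
      rw [Set.uIcc_of_le hz.le]
      refine continuousOn_id.mul (ContinuousOn.rpow_const (by fun_prop) fun s hs => Or.inl ?_)
      have := hs.1
      positivity
    · intro s hs
      have h0 := hs.1
      exact mul_le_mul_of_nonneg_left
        (Real.rpow_le_rpow_of_nonpos (by positivity) (by linarith [hs.2]) (by linarith)) h0
  have := mul_le_mul_of_nonneg_left (hint ▸ hle) hz.le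
  unfold Qp
  linarith

lemma Mp_upper {p z : ℝ} (hp1 : 1 < p) (hp2 : p < 2) (hz : 0 < z) :
    Mp p z ≤ z ^ 3 * (1 + z) ^ (p - 3) := by
  have hp : 0 < p - 1 := by linarith
  have hz1 : 0 < 1 + z := by positivity
  set c := (3 - p) / (p - 1) with hc
  have hc0 : 0 ≤ c := div_nonneg (by linarith) hp.le
  have ha : 2 * p / (p - 1) = (3 : ℕ) + c := by
    rw [hc]; field_simp; push_cast; ring
  have hb : p * (p - 3) / (p - 1) = (p - 3) - c := by
    rw [hc]; field_simp; ring
  unfold Mp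
  rw [ha, hb, Real.rpow_add hz, Real.rpow_sub hz1, Real.rpow_natCast]
  calc z ^ 3 * z ^ c * ((1 + z) ^ (p - 3) / (1 + z) ^ c)
      = z ^ 3 * (1 + z) ^ (p - 3) * (z ^ c / (1 + z) ^ c) := by ring
    _ ≤ z ^ 3 * (1 + z) ^ (p - 3) * 1 := by
        gcongr
        exact div_le_one_of_le₀ (Real.rpow_le_rpow hz.le (by linarith) hc0) (by positivity)
    _ = _ := mul_one _

/-- There exists `K > 0` such that `M_p(z) ≤ K Q_p(z)` for all `z > 0`. -/
theorem stmt13 (p : ℝ) (hp : p ∈ Set.Ioo (1:ℝ) 2) :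
    ∃ K : ℝ, 0 < K ∧ ∀ z : ℝ, 0 < z → Mp p z ≤ K * Qp p z :=
  ⟨2, two_pos, fun _ hz => (Mp_upper hp.1 hp.2 hz).trans (Qp_lower hp.2 hz)⟩
end

section
/- Let Λ > 0, L ≥ 0, and let ω : [0, Λ] → [0, ∞) be L-Lipschitz continuous. Set W := ∫₀^Λ r·ω(r) dr and assume 0 ≤ W ≤ (Λ/3)³. Then ω(r) ≤ (1 + 2L)·W^{1/3} for every r ∈ [0, Λ]. -/
open MeasureTheory

/-!
Let `a > 0` with `a ≤ Λ / 3` and `W ≤ a ^ 3`. Every `r₀ ∈ [0, Λ]` lies within distance `2 a` of all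
points of some interval `[s, s + a] ⊆ [a, Λ]`. If `ω r₀ > (1 + 2 L) a`, the Lipschitz bound gives
`ω ≥ ω r₀ - 2 L a > a` on that interval, where also `r ≥ a`, so `W > a ^ 3`: a contradiction.
Hence `ω ≤ (1 + 2 L) a` (`le_of_weighted_integral_le`). For `W > 0` take `a = W ^ (1 / 3)`; for
`W = 0` let `a` tend to `0`.
-/

/-- The bound at an arbitrary positive scale `a`, which need not be the cube root of the integral;
this freedom is what covers the case of a vanishing integral. -/
theorem le_of_weighted_integral_le {Λ L : ℝ} (hL : 0 ≤ L) {ω : ℝ → ℝ}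
    (hnn : ∀ r ∈ Set.Icc (0:ℝ) Λ, 0 ≤ ω r)
    (hlip : ∀ r ∈ Set.Icc (0:ℝ) Λ, ∀ s ∈ Set.Icc (0:ℝ) Λ, |ω r - ω s| ≤ L * |r - s|)
    {a : ℝ} (ha : 0 < a) (haΛ : a ≤ Λ / 3)
    (hWa : ∫ r in Set.Icc (0:ℝ) Λ, r * ω r ≤ a ^ 3) {r₀ : ℝ} (hr₀ : r₀ ∈ Set.Icc (0:ℝ) Λ) :
    ω r₀ ≤ (1 + 2 * L) * a := by
  by_contra! hlt
  have hcont : ContinuousOn ω (Set.Icc 0 Λ) := by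
    have : LipschitzOnWith L.toNNReal ω (Set.Icc 0 Λ) :=
      LipschitzOnWith.of_dist_le_mul fun x hx y hy => by
        simpa [Real.dist_eq, Real.coe_toNNReal L hL] using hlip x hx y hy
    exact this.continuousOn
  have hint : IntegrableOn (fun r => r * ω r) (Set.Icc 0 Λ) :=
    (continuousOn_id.mul hcont).integrableOn_Icc
  obtain ⟨s, has, hs1, hs2, hs3⟩ :
      ∃ s, a ≤ s ∧ s + a ≤ Λ ∧ r₀ - 2 * a ≤ s ∧ s + a ≤ r₀ + 2 * a := by
    obtain ⟨h0, h1⟩ := hr₀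
    rcases le_total r₀ (2 * a) with h | h
    · exact ⟨a, by linarith, by linarith, by linarith, by linarith⟩
    · exact ⟨r₀ - a, by linarith, by linarith, by linarith, by linarith⟩
  have hsub : Set.Icc s (s + a) ⊆ Set.Icc 0 Λ := Set.Icc_subset_Icc (by linarith) hs1
  have hpt : ∀ r ∈ Set.Icc s (s + a), a * (ω r₀ - 2 * L * a) ≤ r * ω r := by
    intro r hr
    have h1 := (abs_le.1 (hlip r₀ hr₀ r (hsub hr))).2
    have h2 : |r₀ - r| ≤ 2 * a := abs_le.2 ⟨by linarith [hr.2], by linarith [hr.1]⟩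
    have h3 := mul_le_mul_of_nonneg_left h2 hL
    exact mul_le_mul (has.trans hr.1) (by linarith) (by linarith) (by linarith [hr.1])
  have hlow : a * (ω r₀ - 2 * L * a) * a ≤ ∫ r in Set.Icc s (s + a), r * ω r := by
    have := setIntegral_ge_of_const_le_real measurableSet_Icc (by simp) hpt
      (hint.mono_set hsub)
    simpa [Measure.real, ha.le] using this
  have hmono : ∫ r in Set.Icc s (s + a), r * ω r ≤ ∫ r in Set.Icc (0:ℝ) Λ, r * ω r := by
    refine setIntegral_mono_set hint ?_ hsub.eventuallyLE
    filter_upwards [ae_restrict_mem measurableSet_Icc] with r hr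
    exact mul_nonneg hr.1 (hnn r hr)
  have : 0 < a * a * (ω r₀ - 2 * L * a - a) := mul_pos (mul_pos ha ha) (by linarith)
  nlinarith

/-- If `ω : [0, Λ] → [0, ∞)` is `L`-Lipschitz and the weighted integral
`W = ∫₀^Λ r ω(r) dr` satisfies `0 ≤ W ≤ (Λ/3)³`, then `ω(r) ≤ (1 + 2L) W^{1/3}`
uniformly in `r ∈ [0, Λ]`. -/
theorem stmt19 (Λ L : ℝ) (hΛ : 0 < Λ) (hL : 0 ≤ L) (ω : ℝ → ℝ)
    (hnn : ∀ r ∈ Set.Icc (0:ℝ) Λ, 0 ≤ ω r)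
    (hlip : ∀ r ∈ Set.Icc (0:ℝ) Λ, ∀ s ∈ Set.Icc (0:ℝ) Λ, |ω r - ω s| ≤ L * |r - s|)
    (W : ℝ) (hW : W = ∫ r in Set.Icc (0:ℝ) Λ, r * ω r)
    (hW0 : 0 ≤ W) (hWle : W ≤ (Λ / 3) ^ 3) :
    ∀ r ∈ Set.Icc (0:ℝ) Λ, ω r ≤ (1 + 2 * L) * W ^ ((1:ℝ)/3) := by
  intro r hr
  rcases hW0.eq_or_lt with h0 | hpos
  · rw [← h0, Real.zero_rpow (by norm_num), mul_zero]
    by_contra! hω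
    -- A scale `a` so small that the bound at scale `a` gives at most `ω r / 2`.
    have hK : 0 < 1 + 2 * L := by linarith
    have ha : 0 < min (Λ / 3) (ω r / 2 / (1 + 2 * L)) := by positivity
    have h := le_of_weighted_integral_le hL hnn hlip ha (min_le_left _ _)
      (by rw [← hW, ← h0]; positivity) hr
    have h2 := (le_div_iff₀' hK).1 (min_le_right (Λ / 3) (ω r / 2 / (1 + 2 * L)))
    linarith
  · have hcube : (W ^ ((1:ℝ)/3)) ^ 3 = W := by
      rw [← Real.rpow_natCast, ← Real.rpow_mul hW0]
      norm_num
    refine le_of_weighted_integral_le hL hnn hlip (Real.rpow_pos_of_pos hpos _) ?_ ?_ hr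
    · exact le_of_pow_le_pow_left₀ three_ne_zero (by positivity) (hcube.le.trans hWle)
    · rw [hcube, hW]
end
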